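/- Every planar graph G contains a matching M such that G − M is 4-choosable: for every assignment of lists of 4 colours to the vertices, G − M has a proper colouring from the lists. -/

import Mathlib

open MvPolynomial Finset

/- The graph polynomial `P_G = ∏_{uv ∈ E(G), u < v} (x_v - x_u)`. -/
open scoped Classical in
noncomputable def graphPoly {V : Type*} [Fintype V] [LinearOrder V]
    (G : SimpleGraph V) : MvPolynomial V ℝ :=
  ∏ p ∈ Finset.univ.filter (fun p : V × V => G.Adj p.1 p.2 ∧ p.1 < p.2),
    (X p.2 - X p.1)

/- The signed graph polynomial `P_{G,σ} = ∏_{uv ∈ E(G), u < v} (x_v - σ(uv)·x_u)`. -/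
open scoped Classical in
noncomputable def signedGraphPoly {V : Type*} [Fintype V] [LinearOrder V]
    (G : SimpleGraph V) (σ : Sym2 V → ℤ) : MvPolynomial V ℤ :=
  ∏ p ∈ Finset.univ.filter (fun p : V × V => G.Adj p.1 p.2 ∧ p.1 < p.2),
    (X p.2 - C (σ s(p.1, p.2)) * X p.1)

/- `H` is a minor of `G`: branch sets. -/
def SimpleGraph.IsMinor {W V : Type*} (H : SimpleGraph W) (G : SimpleGraph V) : Prop :=
  ∃ f : W → Set V,
    (∀ w, (G.induce (f w)).Connected) ∧
    (∀ w₁ w₂, w₁ ≠ w₂ → Disjoint (f w₁) (f w₂)) ∧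
    (∀ w₁ w₂, H.Adj w₁ w₂ → ∃ v₁ ∈ f w₁, ∃ v₂ ∈ f w₂, G.Adj v₁ v₂)

/- A graph is planar iff it has no `K₅` and no `K₃,₃` minor (Wagner's theorem). -/
def SimpleGraph.IsPlanar {V : Type*} (G : SimpleGraph V) : Prop :=
  ¬ SimpleGraph.IsMinor (completeGraph (Fin 5)) G ∧
  ¬ SimpleGraph.IsMinor (completeBipartiteGraph (Fin 3) (Fin 3)) G



section Minors

variable {V : Type*} {G : SimpleGraph V}

lemma conn_singleton (v : V) : (G.induce ({v} : Set V)).Connected := by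
  have : Nonempty ({v} : Set V) := ⟨⟨v, rfl⟩⟩
  exact ⟨SimpleGraph.Preconnected.of_subsingleton⟩

lemma conn_insert {C : Set V} (hC : (G.induce C).Connected) {a b : V} (ha : a ∈ C)
    (hab : G.Adj a b) : (G.induce (C ∪ {b})).Connected :=
  SimpleGraph.connected_induce_union hC.preconnected (conn_singleton b).preconnected ha rfl hab

lemma k33_minor (A C : Fin 3 → Set V)
    (hA : ∀ i, (G.induce (A i)).Connected) (hC : ∀ i, (G.induce (C i)).Connected)
    (hAA : ∀ i j, i ≠ j → Disjoint (A i) (A j)) (hCC : ∀ i j, i ≠ j → Disjoint (C i) (C j))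
    (hAC : ∀ i j, Disjoint (A i) (C j))
    (h : ∀ i j, ∃ a ∈ A i, ∃ c ∈ C j, G.Adj a c) :
    SimpleGraph.IsMinor (completeBipartiteGraph (Fin 3) (Fin 3)) G := by
  refine ⟨Sum.elim A C, ?_, ?_, ?_⟩
  · rintro (i | i)
    · exact hA i
    · exact hC i
  · rintro (i | i) (j | j) hij
    · exact hAA i j (fun h => hij (by rw [h]))
    · exact hAC i j
    · exact (hAC j i).symm
    · exact hCC i j (fun h => hij (by rw [h]))
  · rintro (i | i) (j | j) hij
    · simp at hij
    · exact h i j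
    · obtain ⟨a, ha, c, hc, hac⟩ := h j i
      exact ⟨c, hc, a, ha, hac.symm⟩
    · simp at hij

lemma k5_minor (A : Fin 5 → Set V) (hA : ∀ i, (G.induce (A i)).Connected)
    (hd : ∀ i j, i < j → Disjoint (A i) (A j))
    (h : ∀ i j, i < j → ∃ a ∈ A i, ∃ c ∈ A j, G.Adj a c) :
    SimpleGraph.IsMinor (SimpleGraph.completeGraph (Fin 5)) G := by
  refine ⟨A, hA, ?_, ?_⟩
  · intro i j hij
    rcases lt_or_gt_of_ne hij with h' | h'
    · exact hd i j h'
    · exact (hd j i h').symm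
  · intro i j hij
    have hij : i ≠ j := hij
    rcases lt_or_gt_of_ne hij with h' | h'
    · exact h i j h'
    · obtain ⟨a, ha, c, hc, hac⟩ := h j i h'
      exact ⟨c, hc, a, ha, hac.symm⟩

/-- `C` is empty or a connected set inside `U`, and with its help `p` and `q` are linked. -/
def LinkBy (G : SimpleGraph V) (U : Set V) (p q : V) (C : Set V) : Prop :=
  (C = ∅ ∧ G.Adj p q) ∨
    ((G.induce C).Connected ∧ C ⊆ U ∧ (∃ c ∈ C, G.Adj p c) ∧ (∃ c ∈ C, G.Adj q c))

lemma LinkBy.conn {U C : Set V} {p q : V} (h : LinkBy G U p q C) :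
    (G.induce ({p} ∪ C)).Connected := by
  rcases h with ⟨rfl, h⟩ | ⟨h1, h2, ⟨c, hc, hpc⟩, h4⟩
  · rw [Set.union_empty]; exact conn_singleton p
  · exact SimpleGraph.connected_induce_union (conn_singleton p).preconnected h1.preconnected rfl
      hc hpc

lemma LinkBy.sub {U C : Set V} {p q : V} (h : LinkBy G U p q C) : C ⊆ U := by
  rcases h with ⟨rfl, h⟩ | ⟨h1, h2, h3, h4⟩
  · simp
  · exact h2

lemma LinkBy.touch {U C : Set V} {p q : V} (h : LinkBy G U p q C) :
    ∃ a ∈ ({p} ∪ C : Set V), G.Adj a q := by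
  rcases h with ⟨rfl, h⟩ | ⟨h1, h2, ⟨c, hc, hpc⟩, ⟨c', hc', hqc⟩⟩
  · exact ⟨p, by simp, h⟩
  · exact ⟨c', by simp [hc'], hqc.symm⟩

lemma LinkBy.symm {U C : Set V} {p q : V} (h : LinkBy G U p q C) : LinkBy G U q p C := by
  rcases h with ⟨rfl, h⟩ | ⟨h1, h2, h3, h4⟩
  · exact Or.inl ⟨rfl, h.symm⟩
  · exact Or.inr ⟨h1, h2, h4, h3⟩

lemma LinkBy.disj {U : Set V} {p q r : V} {C D : Set V} (h : LinkBy G U p q C)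
    (h' : LinkBy G U q r D)
    (hno : ¬ ∃ C : Set V, (G.induce C).Connected ∧ C ⊆ U ∧ (∃ c ∈ C, G.Adj p c) ∧
      (∃ c ∈ C, G.Adj q c) ∧ (∃ c ∈ C, G.Adj r c)) : Disjoint C D := by
  rw [Set.disjoint_iff_inter_eq_empty]
  by_contra hne
  have hne' : (C ∩ D).Nonempty := Set.nonempty_iff_ne_empty.2 hne
  rcases h with ⟨rfl, h⟩ | ⟨h1, h2, ⟨c, hc, hpc⟩, ⟨c', hc', hqc⟩⟩
  · simp at hne
  rcases h' with ⟨rfl, h⟩ | ⟨k1, k2, ⟨e, he, hpe⟩, ⟨e', he', hqe⟩⟩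
  · simp at hne
  exact hno ⟨C ∪ D, SimpleGraph.induce_union_connected h1.preconnected k1.preconnected hne',
    Set.union_subset h2 k2, ⟨c, Or.inl hc, hpc⟩, ⟨c', Or.inl hc', hqc⟩, ⟨e', Or.inr he', hqe⟩⟩

lemma no_three (hG : G.IsPlanar) {Z U : Set V} {v : V} {a b c : V}
    (hZ : (G.induce Z).Connected) (hZU : Disjoint Z U)
    (hvZ : v ∉ Z) (haZ : a ∉ Z) (hbZ : b ∉ Z) (hcZ : c ∉ Z)
    (hvU : v ∉ U) (haU : a ∉ U) (hbU : b ∉ U) (hcU : c ∉ U)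
    (hab : a ≠ b) (hac : a ≠ c) (hbc : b ≠ c)
    (hva : G.Adj v a) (hvb : G.Adj v b) (hvc : G.Adj v c)
    (hzv : ∃ z ∈ Z, G.Adj z v) (hza : ∃ z ∈ Z, G.Adj z a) (hzb : ∃ z ∈ Z, G.Adj z b)
    (hzc : ∃ z ∈ Z, G.Adj z c)
    {Cab Cbc Cca : Set V} (h1 : LinkBy G U a b Cab) (h2 : LinkBy G U b c Cbc)
    (h3 : LinkBy G U c a Cca) : False := by
  by_cases hno : ∃ C : Set V, (G.induce C).Connected ∧ C ⊆ U ∧ (∃ x ∈ C, G.Adj a x) ∧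
      (∃ x ∈ C, G.Adj b x) ∧ (∃ x ∈ C, G.Adj c x)
  · obtain ⟨C, hC, hCU, ⟨x, hx, hax⟩, ⟨y, hy, hby⟩, ⟨w, hw, hcw⟩⟩ := hno
    refine hG.2 (k33_minor ![Z, {v}, C] ![{a}, {b}, {c}] ?_ ?_ ?_ ?_ ?_ ?_)
    · intro i; fin_cases i
      · exact hZ
      · exact conn_singleton v
      · exact hC
    · intro i; fin_cases i
      · exact conn_singleton a
      · exact conn_singleton b
      · exact conn_singleton c
    · have e1 : Disjoint Z {v} := by simpa using hvZ
      have e2 : Disjoint Z C := hZU.mono_right hCU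
      have e3 : Disjoint {v} C := by simpa using fun h => hvU (hCU h)
      intro i j hij
      fin_cases i <;> fin_cases j <;>
        first | exact absurd rfl hij | exact e1 | exact e2 | exact e3 | exact e1.symm
              | exact e2.symm | exact e3.symm
    · intro i j hij
      fin_cases i <;> fin_cases j <;> first | exact absurd rfl hij | simp [*, Ne.symm, eq_comm]
      all_goals grind
    · have n1 := hva.ne
      have n2 := hvb.ne
      have n3 := hvc.ne
      have m1 : a ∉ C := fun h => haU (hCU h)
      have m2 : b ∉ C := fun h => hbU (hCU h)
      have m3 : c ∉ C := fun h => hcU (hCU h)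
      intro i j
      fin_cases i <;> fin_cases j <;> simp [*]
      all_goals grind
    · intro i j
      fin_cases i <;> fin_cases j <;> simp
      all_goals grind [SimpleGraph.Adj.symm]
  · have dabbc := h1.disj h2 hno
    have dbcca : Disjoint Cbc Cca := h2.disj h3 (by
      rintro ⟨C, p1, p2, p3, p4, p5⟩; exact hno ⟨C, p1, p2, p5, p3, p4⟩)
    have dcaab : Disjoint Cca Cab := h3.disj h1 (by
      rintro ⟨C, p1, p2, p3, p4, p5⟩; exact hno ⟨C, p1, p2, p4, p5, p3⟩)
    have s1 := h1.sub
    have s2 := h2.sub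
    have s3 := h3.sub
    have n1 := hva.ne
    have n2 := hvb.ne
    have n3 := hvc.ne
    have t1 := h1.touch
    have t2 := h2.touch
    have t3 := h3.touch
    refine hG.1 (k5_minor ![Z, {v}, {a} ∪ Cab, {b} ∪ Cbc, {c} ∪ Cca] ?_ ?_ ?_)
    · intro i; fin_cases i
      · exact hZ
      · exact conn_singleton v
      · exact h1.conn
      · exact h2.conn
      · exact h3.conn
    · have e1 := hZU.mono_right s1
      have e2 := hZU.mono_right s2
      have e3 := hZU.mono_right s3
      intro i j hij
      fin_cases i <;> fin_cases j <;> first | exact absurd hij (by decide) | skip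
      all_goals simp
      all_goals grind
    · intro i j hij
      fin_cases i <;> fin_cases j <;> first | exact absurd hij (by decide) | skip
      · obtain ⟨z, hz, h⟩ := hzv; exact ⟨z, hz, v, rfl, h⟩
      · obtain ⟨z, hz, h⟩ := hza; exact ⟨z, hz, a, Or.inl rfl, h⟩
      · obtain ⟨z, hz, h⟩ := hzb; exact ⟨z, hz, b, Or.inl rfl, h⟩
      · obtain ⟨z, hz, h⟩ := hzc; exact ⟨z, hz, c, Or.inl rfl, h⟩
      · exact ⟨v, rfl, a, Or.inl rfl, hva⟩
      · exact ⟨v, rfl, b, Or.inl rfl, hvb⟩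
      · exact ⟨v, rfl, c, Or.inl rfl, hvc⟩
      · obtain ⟨p, hp, h⟩ := t1; exact ⟨p, hp, b, Or.inl rfl, h⟩
      · obtain ⟨p, hp, h⟩ := t3; exact ⟨a, Or.inl rfl, p, hp, h.symm⟩
      · obtain ⟨p, hp, h⟩ := t2; exact ⟨p, hp, c, Or.inl rfl, h⟩

/-- If deleting `v, c` does not disconnect, then `a` and `b` are linked off `v, c`. -/
lemma exists_link {S : Set V} {v a b c : V} 
    (ha : a ∈ S) (hb : b ∈ S) (hav : a ≠ v) (hbv : b ≠ v) (hab : a ≠ b) (hac : a ≠ c) (hbc : b ≠ c)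
    (hS : ∀ X ⊆ S \ {v, c}, X.Nonempty → (∀ p ∈ X, ∀ q ∈ S \ {v, c}, G.Adj p q → q ∈ X) →
      X = S \ {v, c}) :
    ∃ C, LinkBy G (S \ {v, a, b, c}) a b C := by
  by_contra hno
  let U := S \ {v, a, b, c}
  let X : Set V := {p | p = a ∨ (p ∈ U ∧ ∃ C : Set V, (G.induce C).Connected ∧ C ⊆ U ∧ p ∈ C ∧
    ∃ x ∈ C, G.Adj a x)}
  have key := hS X ?_ ⟨a, Or.inl rfl⟩ ?_
  · have : b ∈ X := by rw [key]; simp [*]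
    rcases this with h | ⟨h, -⟩
    · exact hab h.symm
    · simp [U] at h
  · rintro p (rfl | ⟨hp, -⟩)
    · simp [*]
    · simp only [U, Set.mem_sdiff, Set.mem_insert_iff, Set.mem_singleton_iff] at hp ⊢
      tauto
  · intro p hp q hq hpq
    by_cases hqa : q = a
    · exact Or.inl hqa
    by_cases hqb : q = b
    · exfalso
      subst hqb
      rcases hp with rfl | ⟨hp, C, hC, hCU, hpC, hx⟩
      · exact hno ⟨∅, Or.inl ⟨rfl, hpq⟩⟩
      · exact hno ⟨C, Or.inr ⟨hC, hCU, hx, ⟨p, hpC, hpq.symm⟩⟩⟩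
    have hqU : q ∈ U := by
      simp only [U, Set.mem_sdiff, Set.mem_insert_iff, Set.mem_singleton_iff] at hq ⊢
      tauto
    refine Or.inr ⟨hqU, ?_⟩
    rcases hp with rfl | ⟨hp, C, hC, hCU, hpC, x, hx, hax⟩
    · exact ⟨{q}, conn_singleton q, by simpa using hqU, rfl, q, rfl, hpq⟩
    · exact ⟨C ∪ {q}, conn_insert hC hpC hpq, Set.union_subset hCU (by simpa using hqU),
        Or.inr rfl, x, Or.inl hx, hax⟩

end Minors

section Poly

variable {V : Type*} {F : Type*} [Field F]

lemma coeff_step {Q : MvPolynomial V F} {d : V →₀ ℕ} {u x : V} (hux : u ≠ x) (hx : d x = 0) :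
    coeff (d + Finsupp.single u 1) (Q * (X u + X x)) = coeff d Q := by
  classical
  rw [mul_add, coeff_add, coeff_mul_X, coeff_mul_X', if_neg, add_zero]
  simp [hx, hux]

lemma coeff_lemA {Q : MvPolynomial V F} {d : V →₀ ℕ} {x : V} (U : Finset V) (hU : x ∉ U)
    (hx : d x = 0) :
    coeff (d + ∑ u ∈ U, Finsupp.single u 1) (Q * ∏ u ∈ U, (X u + X x)) = coeff d Q := by
  classical
  induction U using Finset.induction_on with
  | empty => simp
  | insert a U ha ih =>
    simp only [Finset.mem_insert, not_or] at hU
    rw [Finset.sum_insert ha, Finset.prod_insert ha, mul_comm (X a + X x), ← mul_assoc,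
      add_comm (Finsupp.single a 1), ← add_assoc, coeff_step (Ne.symm hU.1), ih hU.2]
    simp only [Finsupp.add_apply, hx, Finsupp.finsetSum_apply, zero_add]
    refine Finset.sum_eq_zero fun u hu => ?_
    rw [Finsupp.single_apply, if_neg]
    rintro rfl
    exact hU.2 hu

lemma coeff_lemB {Q : MvPolynomial V F} {d : V →₀ ℕ} {x : V} (U : Finset V) (hU : x ∉ U)
    (hx : d x = 0) (hQ : ∀ d, coeff d Q ≠ 0 → d x = 0)
    (h : coeff (d + Finsupp.single x 1 + ∑ u ∈ U, Finsupp.single u 1)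
      (Q * ∏ u ∈ U, (X u + X x)) ≠ 0) :
    ∃ j ∈ U, coeff (d + Finsupp.single j 1) Q ≠ 0 := by
  classical
  induction U using Finset.induction_on with
  | empty =>
    simp only [Finset.sum_empty, add_zero, Finset.prod_empty, mul_one] at h
    have := hQ _ h
    simp at this
  | insert a U ha ih =>
    simp only [Finset.mem_insert, not_or] at hU
    rw [Finset.sum_insert ha, Finset.prod_insert ha, mul_comm (X a + X x), ← mul_assoc,
      mul_add, coeff_add] at h
    have e1 : d + Finsupp.single x 1 + (Finsupp.single a 1 + ∑ u ∈ U, Finsupp.single u 1)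
      = (d + Finsupp.single x 1 + ∑ u ∈ U, Finsupp.single u 1) + Finsupp.single a 1 := by abel
    have e2 : d + Finsupp.single x 1 + (Finsupp.single a 1 + ∑ u ∈ U, Finsupp.single u 1)
      = (d + Finsupp.single a 1 + ∑ u ∈ U, Finsupp.single u 1) + Finsupp.single x 1 := by abel
    nth_rewrite 1 [e1] at h
    rw [e2, coeff_mul_X, coeff_mul_X,
      coeff_lemA (d := d + Finsupp.single a 1) U hU.2 (by simp [hx, Ne.symm hU.1])] at h
    by_cases hc : coeff (d + Finsupp.single a 1) Q = 0
    · rw [hc, add_zero] at h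
      obtain ⟨j, hj, hj'⟩ := ih hU.2 h
      exact ⟨j, Finset.mem_insert_of_mem hj, hj'⟩
    · exact ⟨a, Finset.mem_insert_self _ _, hc⟩

lemma coeff_glue {P Q : MvPolynomial V F} {n : ℕ} (hQ : Q.IsHomogeneous n) (d e : V →₀ ℕ)
    (hd : coeff d P ≠ 0) (he : coeff e Q ≠ 0)
    (h : ∀ p, coeff p P ≠ 0 → ∀ a, e a ≠ 0 → p a = 0) :
    coeff (d + e) (P * Q) ≠ 0 := by
  classical
  rw [coeff_mul, Finset.sum_eq_single (d, e)]
  · exact mul_ne_zero hd he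
  · rintro ⟨p, q⟩ hpq hne
    rw [Finset.HasAntidiagonal.mem_antidiagonal] at hpq
    simp only at hpq
    by_contra hc
    have hp : coeff p P ≠ 0 := left_ne_zero_of_mul hc
    have hq : coeff q Q ≠ 0 := right_ne_zero_of_mul hc
    have hle : e ≤ q := by
      intro a
      by_cases ha : e a = 0
      · omega
      · have h1 := h p hp a ha
        have h2 := h d hd a ha
        have := DFunLike.congr_fun hpq a
        simp only [Finsupp.add_apply] at this
        omega
    obtain ⟨r, rfl⟩ := exists_add_of_le hle
    have hdeg : (e + r).degree = e.degree := by
      have h1 : (e + r).degree = n := by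
        by_contra hh; exact hq (hQ.coeff_eq_zero hh)
      have h2 : e.degree = n := by
        by_contra hh; exact he (hQ.coeff_eq_zero hh)
      rw [h1, h2]
    rw [map_add] at hdeg
    have hr : r = 0 := (Finsupp.degree_eq_zero_iff r).1 (by omega)
    subst hr
    apply hne
    simp only [add_zero] at hpq ⊢
    rw [add_right_cancel hpq]
  · intro hh
    simp at hh

/-- The factor of an edge. -/
noncomputable def efac (F : Type*) [Field F] : Sym2 V → MvPolynomial V F :=
  Sym2.lift ⟨fun a b => X a + X b, fun _ _ => add_comm _ _⟩

/-- The (unsigned) graph polynomial of a set of edges. -/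
noncomputable def epoly (F : Type*) [Field F] (E : Finset (Sym2 V)) : MvPolynomial V F :=
  ∏ e ∈ E, efac F e

lemma efac_mk (a b : V) : efac F s(a, b) = X a + X b := rfl

lemma epoly_hom (E : Finset (Sym2 V)) : (epoly F E).IsHomogeneous E.card := by
  have := MvPolynomial.IsHomogeneous.prod E (efac F) (fun _ => 1) (by
    intro e _
    induction e using Sym2.ind with
    | _ a b => exact (isHomogeneous_X F a).add (isHomogeneous_X F b))
  simpa [epoly] using this

lemma epoly_vars (E : Finset (Sym2 V)) (d : V →₀ ℕ) (h : coeff d (epoly F E) ≠ 0) (a : V)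
    (ha : ∀ e ∈ E, a ∉ e) : d a = 0 := by
  classical
  by_contra hd
  have h1 : a ∈ (epoly F E).vars := by
    rw [mem_vars_iff_mem_support]
    exact ⟨d, by simpa using h, by simpa using hd⟩
  have h2 := vars_prod (efac F) h1
  rw [Finset.mem_biUnion] at h2
  obtain ⟨e, he, hae⟩ := h2
  apply ha e he
  induction e using Sym2.ind with
  | _ p q =>
    have := vars_add_subset _ _ hae
    simpa [vars_X] using this

lemma epoly_union [DecidableEq V] {E E' : Finset (Sym2 V)} (h : Disjoint E E') :
    epoly F (E ∪ E') = epoly F E * epoly F E' := Finset.prod_union h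

lemma epoly_star [DecidableEq V] (x : V) (U : Finset V) :
    epoly F (U.image fun u => s(u, x)) = ∏ u ∈ U, (X u + X x) := by
  rw [epoly, Finset.prod_image]
  · rfl
  · intro a _ b _ h
    simp at h
    grind

end Poly

section Good

variable {V : Type*} [Fintype V] [DecidableEq V] {F : Type*} [Field F] {G : SimpleGraph V}

open scoped Classical in
/-- Edges inside `S`, not inside `R`, and not in `M`. -/
noncomputable def eset (G : SimpleGraph V) (S R : Finset V) (M : Finset (Sym2 V)) :
    Finset (Sym2 V) :=
  Finset.univ.filter fun e => e ∈ G.edgeSet ∧ (∀ a ∈ e, a ∈ S) ∧ ¬ (∀ a ∈ e, a ∈ R) ∧ e ∉ M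

lemma mem_eset {S R : Finset V} {M : Finset (Sym2 V)} {e : Sym2 V} : e ∈ eset G S R M ↔
    e ∈ G.edgeSet ∧ (∀ a ∈ e, a ∈ S) ∧ ¬ (∀ a ∈ e, a ∈ R) ∧ e ∉ M := by
  simp [eset]

open scoped Classical in
/-- The vertices of `S` with a neighbour in `Z`. -/
noncomputable def bd (G : SimpleGraph V) (S : Finset V) (Z : Set V) : Finset V :=
  S.filter fun a => ∃ z ∈ Z, G.Adj z a

lemma mem_bd {S : Finset V} {Z : Set V} {a : V} :
    a ∈ bd G S Z ↔ a ∈ S ∧ ∃ z ∈ Z, G.Adj z a := by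
  simp [bd]

/-- There are a good matching and a good monomial for the vertex set `S` with boundary `B` and
roots `R`. -/
def Good (F : Type*) [Field F] (G : SimpleGraph V) (S B R : Finset V) : Prop :=
  ∃ (M : Finset (Sym2 V)) (d : V →₀ ℕ),
    (∀ e ∈ M, e ∈ G.edgeSet) ∧ (∀ e ∈ M, ∀ a ∈ e, a ∈ S ∧ a ∉ R) ∧
    (∀ e ∈ M, ∀ e' ∈ M, ∀ a, a ∈ e → a ∈ e' → e = e') ∧
    coeff d (epoly F (eset G S R M)) ≠ 0 ∧
    (∀ a ∈ R, d a = 0) ∧ (∀ a ∈ B, d a ≤ 2) ∧ (∀ a ∈ B, ∀ e ∈ M, a ∈ e → d a ≤ 1) ∧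
    (∀ a, d a ≤ 3)

lemma eset_vars {S R : Finset V} {M : Finset (Sym2 V)} {d : V →₀ ℕ}
    (h : coeff d (epoly F (eset G S R M)) ≠ 0) {a : V} (ha : a ∉ S) : d a = 0 := by
  refine epoly_vars _ d h a fun e he hae => ?_
  rw [mem_eset] at he
  exact ha (he.2.1 a hae)

lemma sum_single_apply (U : Finset V) (a : V) :
    (∑ u ∈ U, Finsupp.single u 1 : V →₀ ℕ) a = if a ∈ U then 1 else 0 := by
  rw [Finsupp.finsetSum_apply]
  simp [Finsupp.single_apply]

lemma eset_delete {S R : Finset V} {M M' : Finset (Sym2 V)} {x : V} (hx : x ∈ S)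
    (hM : ∀ e, x ∉ e → (e ∈ M ↔ e ∈ M')) (U : Finset V)
    (hU : ∀ u, u ∈ U ↔ u ∈ S ∧ G.Adj x u ∧ ¬ (x ∈ R ∧ u ∈ R) ∧ s(u, x) ∉ M) :
    epoly F (eset G S R M) =
      epoly F (eset G (S.erase x) (R.erase x) M') * ∏ u ∈ U, (X u + X x) := by
  rw [← epoly_star, ← epoly_union]
  · congr 1
    ext e
    rw [Finset.mem_union, mem_eset, mem_eset, Finset.mem_image]
    by_cases hxe : x ∈ e
    · obtain ⟨u, rfl⟩ := Sym2.mem_iff_exists.1 hxe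
      have h1 : x ∉ S.erase x := by simp
      have h2 : (∃ a ∈ U, s(a, x) = s(x, u)) ↔ u ∈ U := by
        constructor
        · rintro ⟨a, ha, hau⟩
          have : a = u := by
            simp at hau
            grind
          rwa [← this]
        · intro h
          exact ⟨u, h, Sym2.eq_swap⟩
      rw [h2, hU, Sym2.eq_swap (a := u)]
      simp only [SimpleGraph.mem_edgeSet, Sym2.mem_iff, forall_eq_or_imp, forall_eq, hx, true_and]
      tauto
    · have h2 : ¬ (∃ a ∈ U, s(a, x) = e) := by
        rintro ⟨a, -, rfl⟩
        simp at hxe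
      have h3 : ∀ a ∈ e, a ≠ x := fun a ha h => hxe (h ▸ ha)
      have h4 : (∀ a ∈ e, a ∈ S.erase x) ↔ ∀ a ∈ e, a ∈ S :=
        forall₂_congr fun a ha => by simp [h3 a ha]
      have h5 : (∀ a ∈ e, a ∈ R.erase x) ↔ ∀ a ∈ e, a ∈ R :=
        forall₂_congr fun a ha => by simp [h3 a ha]
      rw [h4, h5, hM e hxe]
      simp [h2]
  · rw [Finset.disjoint_left]
    intro e he he'
    rw [mem_eset] at he
    obtain ⟨a, -, rfl⟩ := Finset.mem_image.1 he'
    have := he.2.1 x (by simp)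
    simp at this

lemma good_delete {S B R B' : Finset V} {x : V} (hx : x ∈ S) (hRB : R ⊆ B)
    (hU : ∀ u ∈ S, G.Adj x u → ¬ (x ∈ R ∧ u ∈ R) → u ∈ B' ∧ u ∉ B)
    (hB : ∀ b ∈ B, b ≠ x → b ∈ B')
    (h : Good F G (S.erase x) B' (R.erase x)) : Good F G S B R := by
  classical
  obtain ⟨M, d, h1, h2, h3, h4, h5, h6, h7, h8⟩ := h
  have hxM : ∀ e ∈ M, x ∉ e := fun e he hxe => by simpa using (h2 e he x hxe).1
  let U : Finset V := S.filter fun u => G.Adj x u ∧ ¬ (x ∈ R ∧ u ∈ R) ∧ s(u, x) ∉ M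
  have hUm : ∀ u, u ∈ U ↔ u ∈ S ∧ G.Adj x u ∧ ¬ (x ∈ R ∧ u ∈ R) ∧ s(u, x) ∉ M := by
    intro u; simp [U]
  have hU' : ∀ u ∈ U, u ∈ B' ∧ u ∉ B := fun u hu => by
    rw [hUm] at hu
    exact hU u hu.1 hu.2.1 hu.2.2.1
  have hxU : x ∉ U := fun h => by
    rw [hUm] at h
    exact h.2.1.ne rfl
  have hdx : d x = 0 := eset_vars h4 (by simp)
  refine ⟨M, d + ∑ u ∈ U, Finsupp.single u 1, h1, ?_, h3, ?_, ?_, ?_, ?_, ?_⟩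
  · intro e he a ha
    have := h2 e he a ha
    have hax : a ≠ x := fun h => hxM e he (h ▸ ha)
    simp only [Finset.mem_erase] at this
    tauto
  · rw [eset_delete hx (M' := M) (fun _ _ => Iff.rfl) U hUm, coeff_lemA U hxU hdx]
    exact h4
  · intro a ha
    have haU : a ∉ U := fun h => (hU' a h).2 (hRB ha)
    rw [Finsupp.add_apply, sum_single_apply, if_neg haU]
    by_cases hax : a = x
    · rw [hax, hdx]
    · rw [h5 a (by simp [ha, hax])]
  · intro a ha
    have haU : a ∉ U := fun h => (hU' a h).2 ha
    rw [Finsupp.add_apply, sum_single_apply, if_neg haU]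
    by_cases hax : a = x
    · rw [hax, hdx]; omega
    · simpa using h6 a (hB a ha hax)
  · intro a ha e he hae
    have haU : a ∉ U := fun h => (hU' a h).2 ha
    rw [Finsupp.add_apply, sum_single_apply, if_neg haU]
    by_cases hax : a = x
    · rw [hax, hdx]; omega
    · simpa using h7 a (hB a ha hax) e he hae
  · intro a
    rw [Finsupp.add_apply, sum_single_apply]
    split_ifs with haU
    · have := h6 a (hU' a haU).1
      omega
    · exact h8 a

lemma good_glue {S B R S1 S2 B1 B2 : Finset V} {u w : V} (hS : S = S1 ∪ S2)
    (hI : ∀ a, a ∈ S1 → a ∈ S2 → a = u ∨ a = w) (hu1 : u ∈ S1) (hw1 : w ∈ S1)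
    (hno : ∀ a ∈ S1, ∀ b ∈ S2, G.Adj a b → a ∈ S2 ∨ b ∈ S1)
    (hR : R ⊆ S1) (hBS : B ⊆ S) (hB1 : ∀ b ∈ B, b ∈ S1 → b ∈ B1)
    (hB2 : ∀ b ∈ B, b ∈ S2 → b ∈ B2) 
    (hg1 : Good F G S1 B1 R) (hg2 : Good F G S2 B2 {u, w}) : Good F G S B R := by
  obtain ⟨M, d, h1, h2, h3, h4, h5, h6, h7, h8⟩ := hg1
  obtain ⟨N, e, k1, k2, k3, k4, k5, k6, k7, k8⟩ := hg2
  have he1 : ∀ a ∈ S1, e a = 0 := fun a ha => by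
    by_cases ha2 : a ∈ S2
    · exact k5 a (by simpa using hI a ha ha2)
    · exact eset_vars k4 ha2
  have hd2 : ∀ a, a ∉ S1 → d a = 0 := fun a ha => eset_vars h4 ha
  have hN1 : ∀ f ∈ N, ∀ a ∈ f, a ∉ S1 := fun f hf a ha ha1 => by
    have := k2 f hf a ha
    exact this.2 (by simpa using hI a ha1 this.1)
  have hpoly : epoly F (eset G S R (M ∪ N)) =
      epoly F (eset G S1 R M) * epoly F (eset G S2 {u, w} N) := by
    rw [← epoly_union]
    · congr 1
      ext f
      induction f using Sym2.ind with
      | _ a b =>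
      have q1 : s(a, b) ∈ M → a ∈ S1 ∧ b ∈ S1 := fun h =>
        ⟨(h2 _ h a (by simp)).1, (h2 _ h b (by simp)).1⟩
      have q2 : s(a, b) ∈ N → a ∉ S1 ∧ b ∉ S1 := fun h =>
        ⟨hN1 _ h a (by simp), hN1 _ h b (by simp)⟩
      have q3 := hI a
      have q4 := hI b
      have q5 := hno a
      have q6 := hno b
      have q7 := @hR a
      have q8 := @hR b
      simp only [Finset.mem_union, mem_eset, SimpleGraph.mem_edgeSet, Sym2.mem_iff,
        forall_eq_or_imp, forall_eq, hS, Finset.mem_insert, Finset.mem_singleton]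
      by_cases hab : G.Adj a b
      · have hba := hab.symm
        grind
      · simp [hab]
    · rw [Finset.disjoint_left]
      intro f hf hf'
      rw [mem_eset] at hf hf'
      apply hf'.2.2.1
      intro a ha
      simpa using hI a (hf.2.1 a ha) (hf'.2.1 a ha)
  refine ⟨M ∪ N, d + e, ?_, ?_, ?_, ?_, ?_, ?_, ?_, ?_⟩
  · intro f hf
    rcases Finset.mem_union.1 hf with hf | hf
    · exact h1 f hf
    · exact k1 f hf
  · intro f hf a ha
    rcases Finset.mem_union.1 hf with hf | hf
    · have := h2 f hf a ha
      simp [hS, this]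
    · have h' := k2 f hf a ha
      exact ⟨by simp [hS, h'.1], fun h => hN1 f hf a ha (hR h)⟩
  · intro f hf f' hf' a ha ha'
    rcases Finset.mem_union.1 hf with hf | hf <;> rcases Finset.mem_union.1 hf' with hf' | hf'
    · exact h3 f hf f' hf' a ha ha'
    · exact absurd (h2 f hf a ha).1 (hN1 f' hf' a ha')
    · exact absurd (h2 f' hf' a ha').1 (hN1 f hf a ha)
    · exact k3 f hf f' hf' a ha ha'
  · rw [hpoly]
    refine coeff_glue (epoly_hom _) d e h4 k4 fun p hp a ha => ?_
    exact eset_vars hp fun ha1 => ha (he1 a ha1)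
  · intro a ha
    simp [h5 a ha, he1 a (hR ha)]
  · intro a ha
    by_cases ha1 : a ∈ S1
    · simpa [he1 a ha1] using h6 a (hB1 a ha ha1)
    · have : a ∈ S2 := by
        have := hBS ha
        simpa [hS, ha1] using this
      simpa [hd2 a ha1] using k6 a (hB2 a ha this)
  · intro a ha f hf haf
    by_cases ha1 : a ∈ S1
    · rcases Finset.mem_union.1 hf with hf | hf
      · simpa [he1 a ha1] using h7 a (hB1 a ha ha1) f hf haf
      · exact absurd ha1 (hN1 f hf a haf)
    · have : a ∈ S2 := by
        have := hBS ha
        simpa [hS, ha1] using this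
      rcases Finset.mem_union.1 hf with hf | hf
      · exact absurd (h2 f hf a haf).1 ha1
      · simpa [hd2 a ha1] using k7 a (hB2 a ha this) f hf haf
  · intro a
    by_cases ha1 : a ∈ S1
    · simpa [he1 a ha1] using h8 a
    · simpa [hd2 a ha1] using k8 a

end Good

section Main

variable {V : Type*} [Fintype V] [DecidableEq V] {F : Type*} [Field F] {G : SimpleGraph V}

lemma coeff_roots {Q : MvPolynomial V F} {d : V →₀ ℕ} {v : V} (K : Finset V) (hK : v ∉ K)
    (hd : ∀ k ∈ K, d k = 0) :
    coeff (d + Finsupp.single v K.card) (Q * ∏ k ∈ K, (X k + X v)) = coeff d Q := by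
  induction K using Finset.induction_on with
  | empty => simp
  | insert a K ha ih =>
    simp only [Finset.mem_insert, not_or] at hK
    rw [Finset.card_insert_of_notMem ha, Finset.prod_insert ha, mul_comm (X a + X v), ← mul_assoc,
      Finsupp.single_add, ← add_assoc, add_comm (X a), coeff_step hK.1,
      ih hK.2 fun k hk => hd k (Finset.mem_insert_of_mem hk)]
    simp [hd a (Finset.mem_insert_self _ _), Finsupp.single_apply, hK.1]

lemma good_vertex {S B R B' : Finset V} {x v w : V} (hBS : B ⊆ S) (hRB : R ⊆ B)
    (hxR : x ∈ R) (hvB : v ∈ B) (hvR : v ∉ R) (hxv : G.Adj x v)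
    (hK : ∀ b ∈ B, G.Adj v b → b = x ∨ b = w)
    (hB : ∀ b ∈ B, b ≠ v → b ∈ B') (hNB : ∀ u ∈ S, G.Adj v u → u ∈ B')
    (h : Good F G (S.erase v) B' R) : Good F G S B R := by
  classical
  obtain ⟨M, d, h1, h2, h3, h4, h5, h6, h7, h8⟩ := h
  have hvS := hBS hvB
  have hvM : ∀ e ∈ M, v ∉ e := fun e he hve => by simpa using (h2 e he v hve).1
  have hRv : R.erase v = R := Finset.erase_eq_of_notMem hvR
  have hdv : d v = 0 := eset_vars h4 (by simp)
  have hM2 : ∀ e ∈ M, ∀ a ∈ e, a ∈ S ∧ a ∉ R := fun e he a ha => by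
    have := h2 e he a ha
    simp only [Finset.mem_erase] at this
    tauto
  let U : Finset V := S.filter fun u => G.Adj v u ∧ u ∉ B
  have hUm : ∀ u, u ∈ U ↔ u ∈ S ∧ G.Adj v u ∧ u ∉ B := fun u => by simp [U]
  have hUB : ∀ u ∈ U, u ∉ B := fun u hu => ((hUm u).1 hu).2.2
  have hUB' : ∀ u ∈ U, u ∈ B' := fun u hu => hNB u ((hUm u).1 hu).1 ((hUm u).1 hu).2.1
  have hvU : v ∉ U := fun h => hUB v h hvB
  have hvx : v ≠ x := hxv.ne.symm
  have hxB := hRB hxR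
  have hxU : x ∉ U := fun h => hUB x h hxB
  have hdx : d x = 0 := h5 x hxR
  let Q := epoly F (eset G (S.erase v) R M)
  have hQv : ∀ p, coeff p Q ≠ 0 → p v = 0 := fun p hp => eset_vars hp (by simp)
  by_cases hw : w ∈ B ∧ w ∉ R ∧ G.Adj v w
  · obtain ⟨hwB, hwR, hvw⟩ := hw
    have hxw : x ≠ w := fun h => hwR (h ▸ hxR)
    have hwv : w ≠ v := hvw.ne.symm
    have hwU : w ∉ U := fun h => hUB w h hwB
    have hUxw : ∀ u ∈ U, u ≠ x ∧ u ≠ w ∧ u ≠ v := fun u hu =>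
      ⟨fun h => hxU (h ▸ hu), fun h => hwU (h ▸ hu), fun h => hvU (h ▸ hu)⟩
    have hpoly : epoly F (eset G S R M) =
        Q * (∏ u ∈ U, (X u + X v)) * (X w + X v) * (X v + X x) := by
      rw [eset_delete hvS (M' := M) (fun _ _ => Iff.rfl) (insert x (insert w U)), hRv,
        Finset.prod_insert (by simp [hxw, hxU]), Finset.prod_insert hwU]
      · ring
      · intro u
        have hnM : s(u, v) ∉ M := fun h => hvM _ h (by simp)
        simp only [Finset.mem_insert, hUm, hvR, false_and, not_false_eq_true, true_and, hnM,
          and_true]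
        constructor
        · rintro (rfl | rfl | h)
          · exact ⟨hBS hxB, hxv.symm⟩
          · exact ⟨hBS hwB, hvw⟩
          · exact ⟨h.1, h.2.1⟩
        · rintro ⟨h, h'⟩
          by_cases hu : u ∈ B
          · rcases hK u hu h' with h | h <;> simp [h]
          · exact Or.inr (Or.inr ⟨h, h', hu⟩)
    by_cases hc : coeff (d + Finsupp.single v 1 + ∑ u ∈ U, Finsupp.single u 1)
        (Q * (∏ u ∈ U, (X u + X v)) * (X w + X v)) = 0
    · -- the main term is cancelled
      rw [mul_add, coeff_add] at hc
      have e1 : d + Finsupp.single v 1 + ∑ u ∈ U, Finsupp.single u 1 =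
        (d + ∑ u ∈ U, Finsupp.single u 1) + Finsupp.single v 1 := by abel
      nth_rewrite 2 [e1] at hc
      rw [coeff_mul_X, coeff_lemA U hvU hdv] at hc
      have hc' : coeff (d + Finsupp.single v 1 + ∑ u ∈ U, Finsupp.single u 1)
        (Q * (∏ u ∈ U, (X u + X v)) * X w) ≠ 0 := fun h => by
          rw [h, zero_add] at hc
          exact h4 hc
      have hdw : d w ≠ 0 := by
        intro h
        rw [coeff_mul_X', if_neg] at hc'
        · exact hc' rfl
        · rw [Finsupp.mem_support_iff, not_not]; simp only [Finsupp.add_apply, sum_single_apply, Finsupp.single_apply]; simp [h, hwU, hwv.symm]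
      obtain ⟨d', rfl⟩ : ∃ d', d = d' + Finsupp.single w 1 := by
        have : Finsupp.single w 1 ≤ d := by
          rw [Finsupp.single_le_iff]; omega
        obtain ⟨c, hc⟩ := exists_add_of_le this
        exact ⟨c, by rw [hc, add_comm]⟩
      have e2 : d' + Finsupp.single w 1 + Finsupp.single v 1 + ∑ u ∈ U, Finsupp.single u 1 =
        (d' + Finsupp.single v 1 + ∑ u ∈ U, Finsupp.single u 1) + Finsupp.single w 1 := by abel
      rw [e2, coeff_mul_X] at hc'
      have hd'v : d' v = 0 := by
        simp only [Finsupp.add_apply] at hdv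
        omega
      obtain ⟨j, hj, hjc⟩ := coeff_lemB U hvU hd'v hQv hc'
      have hjx := hUxw j hj
      have hd'x : d' x = 0 := by
        simp only [Finsupp.add_apply] at hdx
        omega
      by_cases hjM : ∃ e ∈ M, j ∈ e
      · obtain ⟨e, he, hje⟩ := hjM
        have hval : ∀ a, (d' + Finsupp.single j 1 + ∑ u ∈ U, Finsupp.single u 1 +
            Finsupp.single w 1 + Finsupp.single v 1 : V →₀ ℕ) a =
            (d' + Finsupp.single w 1 : V →₀ ℕ) a + (if a = j then 1 else 0)
              + (if a ∈ U then 1 else 0) + (if a = v then 1 else 0) := by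
          intro a
          simp only [Finsupp.add_apply, sum_single_apply, Finsupp.single_apply, eq_comm (a := a)]
          ring
        refine ⟨M, d' + Finsupp.single j 1 + ∑ u ∈ U, Finsupp.single u 1 + Finsupp.single w 1 +
          Finsupp.single v 1, h1, hM2, h3, ?_, ?_, ?_, ?_, ?_⟩
        · rw [hpoly, coeff_step hvx, coeff_step hwv, coeff_lemA U hvU]
          · exact hjc
          · simp [hd'v, hjx]
          · simp only [Finsupp.add_apply, sum_single_apply, Finsupp.single_apply]; simp [hd'v, hvU, hjx, eq_comm]; try grind
          · simp only [Finsupp.add_apply, sum_single_apply, Finsupp.single_apply]; simp [hd'x, hxU, hjx, hxw, eq_comm]; try grind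
        · intro a ha
          have haU : a ∉ U := fun h => hUB a h (hRB ha)
          have haj : a ≠ j := fun h => haU (h ▸ hj)
          have hav : a ≠ v := fun h => hvR (h ▸ ha)
          rw [hval, h5 a ha]
          simp [haU, haj, hav]
        · intro a ha
          have haU : a ∉ U := fun h => hUB a h ha
          have haj : a ≠ j := fun h => haU (h ▸ hj)
          rw [hval, if_neg haU, if_neg haj]
          by_cases hav : a = v
          · rw [hav, hdv]; simp
          · rw [if_neg hav]
            exact h6 a (hB a ha hav)
        · intro a ha f hf haf
          have haU : a ∉ U := fun h => hUB a h ha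
          have haj : a ≠ j := fun h => haU (h ▸ hj)
          rw [hval, if_neg haU, if_neg haj]
          by_cases hav : a = v
          · rw [hav, hdv]; simp
          · rw [if_neg hav]
            exact h7 a (hB a ha hav) f hf haf
        · intro a
          rw [hval]
          by_cases haU : a ∈ U
          · rw [if_pos haU, if_neg (hUxw a haU).2.2]
            by_cases haj : a = j
            · have := h7 j (hUB' j hj) e he hje
              rw [if_pos haj, haj]
              omega
            · have := h6 a (hUB' a haU)
              rw [if_neg haj]
              omega
          · have haj : a ≠ j := fun h => haU (h ▸ hj)
            rw [if_neg haU, if_neg haj]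
            by_cases hav : a = v
            · rw [hav, hdv]; simp
            · rw [if_neg hav]
              exact h8 a
      · have hval : ∀ a, (d' + Finsupp.single j 1 + ∑ u ∈ U.erase j, Finsupp.single u 1 +
            Finsupp.single w 1 + Finsupp.single v 1 : V →₀ ℕ) a =
            (d' + Finsupp.single w 1 : V →₀ ℕ) a
              + (if a ∈ U then 1 else 0) + (if a = v then 1 else 0) := by
          intro a
          simp only [Finsupp.add_apply, sum_single_apply, Finsupp.single_apply, eq_comm (a := a),
            Finset.mem_erase]
          by_cases haj : j = a
          · subst haj
            simp [hj]
            ring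
          · have : ¬ a = j := fun h => haj h.symm
            simp [haj, this]
            ring
        have hpoly' : epoly F (eset G S R (insert s(j, v) M)) =
            Q * (∏ u ∈ U.erase j, (X u + X v)) * (X w + X v) * (X v + X x) := by
          rw [eset_delete hvS (M' := M) ?_ (insert x (insert w (U.erase j))), hRv,
            Finset.prod_insert (by simp [hxw, hxU]), Finset.prod_insert (by simp [hwU])]
          · ring
          · intro u
            have hnM : s(u, v) ∉ M := fun h => hvM _ h (by simp)
            have hnj : s(u, v) = s(j, v) ↔ u = j := by
              constructor
              · intro h
                simp at h
                grind
              · rintro rfl; rfl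
            simp only [Finset.mem_insert, hUm, hvR, false_and, not_false_eq_true, true_and, hnM,
              or_false, Finset.mem_erase, hnj]
            constructor
            · rintro (rfl | rfl | h)
              · exact ⟨hBS hxB, hxv.symm, hjx.1.symm⟩
              · exact ⟨hBS hwB, hvw, hjx.2.1.symm⟩
              · exact ⟨h.2.1, h.2.2.1, h.1⟩
            · rintro ⟨h, h', h''⟩
              by_cases hu : u ∈ B
              · rcases hK u hu h' with h | h <;> simp [h]
              · exact Or.inr (Or.inr ⟨h'', h, h', hu⟩)
          · intro e hve
            rw [Finset.mem_insert]
            constructor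
            · rintro (rfl | h)
              · simp at hve
              · exact h
            · exact Or.inr
        refine ⟨insert s(j, v) M, d' + Finsupp.single j 1 + ∑ u ∈ U.erase j, Finsupp.single u 1 +
          Finsupp.single w 1 + Finsupp.single v 1, ?_, ?_, ?_, ?_, ?_, ?_, ?_, ?_⟩
        · intro e he
          rcases Finset.mem_insert.1 he with rfl | he
          · exact ((hUm j).1 hj).2.1.symm
          · exact h1 e he
        · intro e he a ha
          rcases Finset.mem_insert.1 he with rfl | he
          · rcases Sym2.mem_iff.1 ha with rfl | rfl
            · exact ⟨((hUm a).1 hj).1, fun h => hUB a hj (hRB h)⟩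
            · exact ⟨hvS, hvR⟩
          · exact hM2 e he a ha
        · have key : ∀ e ∈ M, ∀ a, a ∈ e → a ∉ s(j, v) := by
            intro e he a ha ha'
            rcases Sym2.mem_iff.1 ha' with rfl | rfl
            · exact hjM ⟨e, he, ha⟩
            · exact hvM e he ha
          intro e he f hf a hae haf
          rcases Finset.mem_insert.1 he with rfl | he <;> rcases Finset.mem_insert.1 hf with rfl | hf
          · rfl
          · exact absurd hae (key f hf a haf)
          · exact absurd haf (key e he a hae)
          · exact h3 e he f hf a hae haf
        · rw [hpoly', coeff_step hvx, coeff_step hwv, coeff_lemA (U.erase j) (by simp [hvU])]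
          · exact hjc
          · simp [hd'v, hjx]
          · simp only [Finsupp.add_apply, sum_single_apply, Finsupp.single_apply]; simp [hd'v, hvU, hjx, eq_comm]; try grind
          · simp only [Finsupp.add_apply, sum_single_apply, Finsupp.single_apply]; simp [hd'x, hxU, hjx, hxw, eq_comm]; try grind
        · intro a ha
          have haU : a ∉ U := fun h => hUB a h (hRB ha)
          have hav : a ≠ v := fun h => hvR (h ▸ ha)
          rw [hval, h5 a ha]
          simp [haU, hav]
        · intro a ha
          have haU : a ∉ U := fun h => hUB a h ha
          rw [hval, if_neg haU]
          by_cases hav : a = v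
          · rw [hav, hdv]; simp
          · rw [if_neg hav]
            exact h6 a (hB a ha hav)
        · intro a ha f hf haf
          have haU : a ∉ U := fun h => hUB a h ha
          rw [hval, if_neg haU]
          by_cases hav : a = v
          · rw [hav, hdv]; simp
          · rw [if_neg hav]
            rcases Finset.mem_insert.1 hf with rfl | hf
            · exfalso
              rcases Sym2.mem_iff.1 haf with h | h
              · exact haU (h ▸ hj)
              · exact hav h
            · exact h7 a (hB a ha hav) f hf haf
        · intro a
          rw [hval]
          by_cases haU : a ∈ U
          · rw [if_pos haU, if_neg (hUxw a haU).2.2]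
            have := h6 a (hUB' a haU)
            omega
          · rw [if_neg haU]
            by_cases hav : a = v
            · rw [hav, hdv]; simp
            · rw [if_neg hav]
              exact h8 a
    · -- no cancellation
      have hval : ∀ a, (d + Finsupp.single v 1 + ∑ u ∈ U, Finsupp.single u 1 +
          Finsupp.single v 1 : V →₀ ℕ) a =
          d a + (if a ∈ U then 1 else 0) + (if a = v then 2 else 0) := by
        intro a
        simp only [Finsupp.add_apply, sum_single_apply, Finsupp.single_apply, eq_comm (a := a)]
        split_ifs <;> ring
      refine ⟨M, d + Finsupp.single v 1 + ∑ u ∈ U, Finsupp.single u 1 + Finsupp.single v 1,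
        h1, hM2, h3, ?_, ?_, ?_, ?_, ?_⟩
      · rw [hpoly, coeff_step hvx]
        · exact hc
        · simp only [Finsupp.add_apply, sum_single_apply, Finsupp.single_apply]; simp [hdx, hxU, hvx, eq_comm]; try grind
      · intro a ha
        have haU : a ∉ U := fun h => hUB a h (hRB ha)
        have hav : a ≠ v := fun h => hvR (h ▸ ha)
        rw [hval, h5 a ha]
        simp [haU, hav]
      · intro a ha
        have haU : a ∉ U := fun h => hUB a h ha
        rw [hval, if_neg haU]
        by_cases hav : a = v
        · rw [hav, hdv]; simp
        · rw [if_neg hav]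
          exact h6 a (hB a ha hav)
      · intro a ha f hf haf
        have haU : a ∉ U := fun h => hUB a h ha
        have hav : a ≠ v := fun h => hvM f hf (h ▸ haf)
        rw [hval, if_neg haU, if_neg hav]
        exact h7 a (hB a ha hav) f hf haf
      · intro a
        rw [hval]
        by_cases haU : a ∈ U
        · rw [if_pos haU, if_neg (hUxw a haU).2.2]
          have := h6 a (hUB' a haU)
          omega
        · rw [if_neg haU]
          by_cases hav : a = v
          · rw [hav, hdv]; simp
          · rw [if_neg hav]
            exact h8 a
  · -- all boundary neighbours are roots
    let K : Finset V := B.filter fun b => G.Adj v b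
    have hKm : ∀ b, b ∈ K ↔ b ∈ B ∧ G.Adj v b := fun b => by simp [K]
    have hKR : ∀ b ∈ K, b ∈ R := by
      intro b hb
      rw [hKm] at hb
      by_contra hbR
      rcases hK b hb.1 hb.2 with rfl | rfl
      · exact hbR hxR
      · exact hw ⟨hb.1, hbR, hb.2⟩
    have hKc : K.card ≤ 2 := by
      have : K ⊆ {x, w} := fun b hb => by
        rw [hKm] at hb
        simpa using hK b hb.1 hb.2
      exact (Finset.card_le_card this).trans Finset.card_le_two
    have hvK : v ∉ K := fun h => hvR (hKR v h)
    have hKU : ∀ k ∈ K, k ∉ U := fun k hk h => hUB k h ((hKm k).1 hk).1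
    have hpoly : epoly F (eset G S R M) =
        Q * (∏ u ∈ U, (X u + X v)) * ∏ k ∈ K, (X k + X v) := by
      rw [eset_delete hvS (M' := M) (fun _ _ => Iff.rfl) (U ∪ K), hRv,
        Finset.prod_union (Finset.disjoint_left.2 fun a h h' => hKU a h' h), mul_assoc]
      intro u
      have hnM : s(u, v) ∉ M := fun h => hvM _ h (by simp)
      simp only [Finset.mem_union, hUm, hKm, hvR, false_and, not_false_eq_true, true_and, hnM,
        and_true]
      have := @hBS u
      tauto
    have hval : ∀ a, (d + ∑ u ∈ U, Finsupp.single u 1 + Finsupp.single v K.card : V →₀ ℕ) a =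
          d a + (if a ∈ U then 1 else 0) + (if a = v then K.card else 0) := by
      intro a
      simp only [Finsupp.add_apply, sum_single_apply, Finsupp.single_apply, eq_comm (a := a)]
    refine ⟨M, d + ∑ u ∈ U, Finsupp.single u 1 + Finsupp.single v K.card,
        h1, hM2, h3, ?_, ?_, ?_, ?_, ?_⟩
    · rw [hpoly, coeff_roots K hvK, coeff_lemA U hvU hdv]
      · exact h4
      · intro k hk
        simp only [Finsupp.add_apply, sum_single_apply, Finsupp.single_apply]; simp [h5 k (hKR k hk), hKU k hk, eq_comm]; try grind
    · intro a ha
      have haU : a ∉ U := fun h => hUB a h (hRB ha)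
      have hav : a ≠ v := fun h => hvR (h ▸ ha)
      rw [hval, h5 a ha]
      simp [haU, hav]
    · intro a ha
      have haU : a ∉ U := fun h => hUB a h ha
      rw [hval, if_neg haU]
      by_cases hav : a = v
      · rw [hav, hdv]; simpa using hKc
      · rw [if_neg hav]
        exact h6 a (hB a ha hav)
    · intro a ha f hf haf
      have haU : a ∉ U := fun h => hUB a h ha
      have hav : a ≠ v := fun h => hvM f hf (h ▸ haf)
      rw [hval, if_neg haU, if_neg hav]
      exact h7 a (hB a ha hav) f hf haf
    · intro a
      rw [hval]
      by_cases haU : a ∈ U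
      · have hav : a ≠ v := fun h => hvU (h ▸ haU)
        rw [if_pos haU, if_neg hav]
        have := h6 a (hUB' a haU)
        omega
      · rw [if_neg haU]
        by_cases hav : a = v
        · rw [hav, hdv]; simp; omega
        · rw [if_neg hav]
          exact h8 a


end Main

section Induct

variable {V : Type*} [Fintype V] [DecidableEq V] {F : Type*} [Field F] {G : SimpleGraph V}

/-- If no adjacent pair of boundary vertices separates `S`, a boundary vertex has no three
boundary neighbours. -/
lemma no_three_bd (hG : G.IsPlanar) {S : Finset V} {Z : Set V}
    (hZ : (G.induce Z).Connected) (hSZ : ∀ a ∈ S, a ∉ Z)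
    (hsep : ∀ u ∈ bd G S Z, ∀ w ∈ bd G S Z, G.Adj u w → ∀ X ⊆ (S : Set V) \ {u, w}, X.Nonempty →
      (∀ p ∈ X, ∀ q ∈ (S : Set V) \ {u, w}, G.Adj p q → q ∈ X) → X = (S : Set V) \ {u, w})
    {v a b c : V} (hv : v ∈ bd G S Z) (ha : a ∈ bd G S Z) (hb : b ∈ bd G S Z)
    (hc : c ∈ bd G S Z) (hva : G.Adj v a) (hvb : G.Adj v b) (hvc : G.Adj v c)
    (hab : a ≠ b) (hac : a ≠ c) (hbc : b ≠ c) : False := by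
  have hv' := mem_bd.1 hv
  have ha' := mem_bd.1 ha
  have hb' := mem_bd.1 hb
  have hc' := mem_bd.1 hc
  obtain ⟨C1, h1⟩ := exists_link (G := G) (S := (S : Set V)) (v := v) (c := c) ha'.1 hb'.1
    hva.ne.symm hvb.ne.symm hab hac hbc (hsep v hv c hc hvc)
  obtain ⟨C2, h2⟩ := exists_link (G := G) (S := (S : Set V)) (v := v) (c := a) hb'.1 hc'.1
    hvb.ne.symm hvc.ne.symm hbc hab.symm hac.symm (hsep v hv a ha hva)
  obtain ⟨C3, h3⟩ := exists_link (G := G) (S := (S : Set V)) (v := v) (c := b) hc'.1 ha'.1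
    hvc.ne.symm hva.ne.symm hac.symm hbc.symm hab (hsep v hv b hb hvb)
  have e2 : ({v, b, c, a} : Set V) = {v, a, b, c} := by
    ext p; simp only [Set.mem_insert_iff, Set.mem_singleton_iff]; tauto
  have e3 : ({v, c, a, b} : Set V) = {v, a, b, c} := by
    ext p; simp only [Set.mem_insert_iff, Set.mem_singleton_iff]; tauto
  rw [e2] at h2
  rw [e3] at h3
  refine no_three hG hZ ?_ (hSZ v hv'.1) (hSZ a ha'.1) (hSZ b hb'.1) (hSZ c hc'.1) ?_ ?_ ?_ ?_
    hab hac hbc hva hvb hvc hv'.2 ha'.2 hb'.2 hc'.2 h1 h2 h3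
  · rw [Set.disjoint_left]
    intro z hz hz'
    exact hSZ z hz'.1 hz
  all_goals simp

lemma good_weaken {S B : Finset V} {b : V} (h : Good F G S B {b}) : Good F G S B ∅ := by
  obtain ⟨M, d, h1, h2, h3, h4, h5, h6, h7, h8⟩ := h
  refine ⟨M, d, h1, fun e he a ha => ⟨(h2 e he a ha).1, by simp⟩, h3, ?_, by simp, h6, h7, h8⟩
  have : eset G S ∅ M = eset G S {b} M := by
    ext e
    rw [mem_eset, mem_eset]
    induction e using Sym2.ind with
    | _ p q =>
    simp only [SimpleGraph.mem_edgeSet, Sym2.mem_iff, forall_eq_or_imp, forall_eq,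
      Finset.notMem_empty, Finset.mem_singleton]
    have : G.Adj p q → p ≠ q := fun h => h.ne
    grind
  rwa [this]

lemma good_empty {B : Finset V} : Good F G ∅ B ∅ := by
  refine ⟨∅, 0, by simp, by simp, by simp, ?_, by simp, by simp, by simp, by simp⟩
  have : eset G ∅ ∅ (∅ : Finset (Sym2 V)) = ∅ := by
    ext e
    rw [mem_eset]
    induction e using Sym2.ind with
    | _ p q => simp
  rw [this]
  simp [epoly]

lemma good_main (hG : G.IsPlanar) (n : ℕ) : ∀ (S : Finset V) (Z : Set V) (R : Finset V),
    S.card = n → (G.induce Z).Connected → (∀ a ∈ S, a ∉ Z) → R ⊆ bd G S Z →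
    (∀ a ∈ R, ∀ b ∈ R, a ≠ b → G.Adj a b) → Good F G S (bd G S Z) R := by
  classical
  induction n using Nat.strong_induction_on with
  | _ n IH =>
  intro S Z R hn hZ hSZ hRB hcl
  have hBS : bd G S Z ⊆ S := fun a ha => (mem_bd.1 ha).1
  -- deleting a boundary vertex
  have hdel : ∀ x ∈ bd G S Z, ∀ R', R' ⊆ bd G S Z → R' ⊆ S.erase x →
      (∀ a ∈ R', ∀ b ∈ R', a ≠ b → G.Adj a b) →
      Good F G (S.erase x) (bd G (S.erase x) (Z ∪ {x})) R' := by
    intro x hx R' hR' hR'' hcl'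
    obtain ⟨hxS, z, hz, hzx⟩ := mem_bd.1 hx
    refine IH (S.erase x).card ?_ _ _ _ rfl (conn_insert hZ hz hzx) ?_ ?_ hcl'
    · rw [← hn]; exact Finset.card_erase_lt_of_mem hxS
    · intro a ha haZ
      rw [Finset.mem_erase] at ha
      rcases haZ with h | h
      · exact hSZ a ha.2 h
      · exact ha.1 h
    · intro a ha
      obtain ⟨-, y, hy, hya⟩ := mem_bd.1 (hR' ha)
      exact mem_bd.2 ⟨hR'' ha, y, Or.inl hy, hya⟩
  have hdB : ∀ x, ∀ b ∈ bd G S Z, b ≠ x → b ∈ bd G (S.erase x) (Z ∪ {x}) := by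
    intro x b hb hbx
    obtain ⟨hbS, y, hy, hyb⟩ := mem_bd.1 hb
    exact mem_bd.2 ⟨by simp [hbx, hbS], y, Or.inl hy, hyb⟩
  have hdN : ∀ x, ∀ u ∈ S, G.Adj x u → u ∈ bd G (S.erase x) (Z ∪ {x}) := by
    intro x u hu hxu
    exact mem_bd.2 ⟨by simp [hu, hxu.ne.symm], x, Or.inr rfl, hxu⟩
  -- the case of a nonempty root set
  have main : ∀ R : Finset V, R.Nonempty → R ⊆ bd G S Z →
      (∀ a ∈ R, ∀ b ∈ R, a ≠ b → G.Adj a b) → Good F G S (bd G S Z) R := by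
    intro R hne hRB hcl
    by_cases hsep : ∀ u ∈ bd G S Z, ∀ w ∈ bd G S Z, G.Adj u w →
      ∀ X ⊆ (S : Set V) \ {u, w}, X.Nonempty →
      (∀ p ∈ X, ∀ q ∈ (S : Set V) \ {u, w}, G.Adj p q → q ∈ X) → X = (S : Set V) \ {u, w}
    · obtain ⟨x, hx⟩ := hne
      have hxB := hRB hx
      by_cases hnb : ∀ b ∈ bd G S Z, G.Adj x b → b ∈ R
      · refine good_delete (x := x) (hBS hxB) hRB ?_ (hdB x) (hdel x hxB (R.erase x) ?_ ?_ ?_)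
        · intro u hu hxu hR
          exact ⟨hdN x u hu hxu, fun h => hR ⟨hx, hnb u h hxu⟩⟩
        · exact (Finset.erase_subset _ _).trans hRB
        · exact Finset.erase_subset_erase _ (hRB.trans hBS)
        · intro a ha b hb
          exact hcl a (Finset.mem_of_mem_erase ha) b (Finset.mem_of_mem_erase hb)
      · push Not at hnb
        obtain ⟨v, hvB, hxv, hvR⟩ := hnb
        have hw : ∃ w, ∀ b ∈ bd G S Z, G.Adj v b → b = x ∨ b = w := by
          by_cases h : ∃ w ∈ bd G S Z, G.Adj v w ∧ w ≠ x
          · obtain ⟨w, hwB, hvw, hwx⟩ := h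
            refine ⟨w, fun b hb hvb => ?_⟩
            by_contra hcon
            push Not at hcon
            exact no_three_bd hG hZ hSZ hsep hvB hxB hwB hb hxv.symm hvw hvb hwx.symm
              hcon.1.symm hcon.2.symm
          · push Not at h
            exact ⟨x, fun b hb hvb => Or.inl (h b hb hvb)⟩
        obtain ⟨w, hw⟩ := hw
        refine good_vertex hBS hRB hx hvB hvR hxv hw (hdB v) (hdN v) (hdel v hvB R hRB ?_ hcl)
        intro a ha
        rw [Finset.mem_erase]
        exact ⟨fun h => hvR (h ▸ ha), hBS (hRB ha)⟩
    · push Not at hsep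
      obtain ⟨u, hu, w, hw, huw, X, hXs, hXne, hXcl, hXneq⟩ := hsep
      have huS := hBS hu
      have hwS := hBS hw
      -- the two sides
      let Y : Finset V := S.filter fun a => a ∈ X
      have hY : ∀ a, a ∈ Y ↔ a ∈ X := fun a => by
        simp only [Y, Finset.mem_filter]
        exact ⟨fun h => h.2, fun h => ⟨(hXs h).1, h⟩⟩
      have hYuw : ∀ a ∈ Y, a ∈ S ∧ a ≠ u ∧ a ≠ w := fun a ha => by
        have := hXs ((hY a).1 ha)
        simpa using this
      obtain ⟨y, hy⟩ := hXne
      have hyY := (hY y).2 hy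
      obtain ⟨t, htS, htu, htw, htY⟩ : ∃ t ∈ S, t ≠ u ∧ t ≠ w ∧ t ∉ Y := by
        by_contra hcon
        push Not at hcon
        apply hXneq
        refine Set.Subset.antisymm hXs ?_
        rintro a ⟨ha, ha'⟩
        simp only [Set.mem_insert_iff, Set.mem_singleton_iff, not_or] at ha'
        exact (hY a).1 (hcon a ha ha'.1 ha'.2)
      have hYcl : ∀ p ∈ Y, ∀ q ∈ S, G.Adj p q → q ∈ Y ∨ q = u ∨ q = w := by
        intro p hp q hq hpq
        by_cases hqq : q = u ∨ q = w
        · exact Or.inr hqq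
        · refine Or.inl ((hY q).2 (hXcl p ((hY p).1 hp) q ⟨hq, ?_⟩ hpq))
          simpa using hqq
      let S1 : Finset V := insert u (insert w Y)
      let S2 : Finset V := S \ Y
      have m1 : ∀ a, a ∈ S1 ↔ a = u ∨ a = w ∨ a ∈ Y := fun a => by simp [S1]
      have m2 : ∀ a, a ∈ S2 ↔ a ∈ S ∧ a ∉ Y := fun a => by simp [S2]
      have s1 : S1 ⊆ S := fun a ha => by
        rcases (m1 a).1 ha with rfl | rfl | h
        · exact huS
        · exact hwS
        · exact (hYuw a h).1
      have s2 : S2 ⊆ S := fun a ha => ((m2 a).1 ha).1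
      have c1 : S1.card < n := by
        rw [← hn]
        refine Finset.card_lt_card (Finset.ssubset_iff_subset_ne.2 ⟨s1, fun h => ?_⟩)
        have := (m1 t).1 (h ▸ htS)
        tauto
      have c2 : S2.card < n := by
        rw [← hn]
        refine Finset.card_lt_card (Finset.ssubset_iff_subset_ne.2 ⟨s2, fun h => ?_⟩)
        have hyS := (hYuw y hyY).1
        rw [← h] at hyS
        exact ((m2 y).1 hyS).2 hyY
      have gen : ∀ S' : Finset V, S' ⊆ S → S'.card < n → ∀ R' ⊆ bd G S Z, R' ⊆ S' →
          (∀ a ∈ R', ∀ b ∈ R', a ≠ b → G.Adj a b) → Good F G S' (bd G S' Z) R' := by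
        intro S' hs hc R' hR' hR'' hcl'
        refine IH _ hc S' Z R' rfl hZ (fun a ha => hSZ a (hs ha)) ?_ hcl'
        intro a ha
        exact mem_bd.2 ⟨hR'' ha, (mem_bd.1 (hR' ha)).2⟩
      have hbb : ∀ S' : Finset V, ∀ b ∈ bd G S Z, b ∈ S' → b ∈ bd G S' Z := by
        intro S' b hb hb'
        exact mem_bd.2 ⟨hb', (mem_bd.1 hb).2⟩
      have u1 : u ∈ S1 := (m1 u).2 (Or.inl rfl)
      have w1 : w ∈ S1 := (m1 w).2 (Or.inr (Or.inl rfl))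
      have u2 : u ∈ S2 := (m2 u).2 ⟨huS, fun h => (hYuw u h).2.1 rfl⟩
      have w2 : w ∈ S2 := (m2 w).2 ⟨hwS, fun h => (hYuw w h).2.2 rfl⟩
      have huwB : ({u, w} : Finset V) ⊆ bd G S Z := by
        intro a ha
        rcases Finset.mem_insert.1 ha with rfl | ha
        · exact hu
        · rw [Finset.mem_singleton.1 ha]; exact hw
      have hpair : ∀ S' : Finset V, u ∈ S' → w ∈ S' → ({u, w} : Finset V) ⊆ S' := by
        intro S' h h' a ha
        rcases Finset.mem_insert.1 ha with rfl | ha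
        · exact h
        · rw [Finset.mem_singleton.1 ha]; exact h'
      have huwcl : ∀ a ∈ ({u, w} : Finset V), ∀ b ∈ ({u, w} : Finset V), a ≠ b → G.Adj a b := by
        intro a ha b hb hab
        simp only [Finset.mem_insert, Finset.mem_singleton] at ha hb
        rcases ha with rfl | rfl <;> rcases hb with rfl | rfl
        · exact absurd rfl hab
        · exact huw
        · exact huw.symm
        · exact absurd rfl hab
      have hun : S = S1 ∪ S2 := by
        ext a
        rw [Finset.mem_union, m1, m2]
        have := hYuw a
        constructor
        · tauto
        · rintro ((rfl | rfl | h) | h)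
          · exact huS
          · exact hwS
          · exact (this h).1
          · exact h.1
      have hI : ∀ a, a ∈ S1 → a ∈ S2 → a = u ∨ a = w := by
        intro a h1 h2
        rw [m1] at h1
        rw [m2] at h2
        tauto
      have hno : ∀ a ∈ S1, ∀ b ∈ S2, G.Adj a b → a ∈ S2 ∨ b ∈ S1 := by
        intro a ha b hb hab
        rcases (m1 a).1 ha with rfl | rfl | h
        · exact Or.inl u2
        · exact Or.inl w2
        · rcases hYcl a h b (s2 hb) hab with h | rfl | rfl
          · exact absurd h ((m2 b).1 hb).2
          · exact Or.inr u1
          · exact Or.inr w1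
      by_cases hR1 : R ⊆ S1
      · exact good_glue hun hI u1 w1 hno hR1 hBS (hbb S1) (hbb S2)
          (gen S1 s1 c1 R hRB hR1 hcl) (gen S2 s2 c2 _ huwB (hpair _ u2 w2) huwcl)
      · have hR2 : R ⊆ S2 := by
          intro a ha
          rw [Finset.subset_iff] at hR1
          push Not at hR1
          obtain ⟨r, hr, hr1⟩ := hR1
          refine (m2 a).2 ⟨hBS (hRB ha), fun haY => hr1 ?_⟩
          by_cases har : a = r
          · rw [← har]; exact (m1 a).2 (Or.inr (Or.inr haY))
          · rcases hYcl a haY r (hBS (hRB hr)) (hcl a ha r hr har) with h | rfl | rfl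
            · exact (m1 r).2 (Or.inr (Or.inr h))
            · exact u1
            · exact w1
        refine good_glue (hun.trans (Finset.union_comm _ _)) (fun a h h' => hI a h' h) u2 w2 ?_
          hR2 hBS (hbb S2) (hbb S1)
          (gen S2 s2 c2 R hRB hR2 hcl) (gen S1 s1 c1 _ huwB (hpair _ u1 w1) huwcl)
        intro a ha b hb hab
        exact (hno b hb a ha hab.symm).symm
  by_cases hne : R.Nonempty
  · exact main R hne hRB hcl
  · rw [Finset.not_nonempty_iff_eq_empty] at hne
    subst hne
    by_cases hB : (bd G S Z).Nonempty
    · obtain ⟨b, hb⟩ := hB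
      refine good_weaken (main {b} (by simp) (by simpa using hb) ?_)
      intro p hp q hq hpq
      rw [Finset.mem_singleton] at hp hq
      exact absurd (hp.trans hq.symm) hpq
    · rw [Finset.not_nonempty_iff_eq_empty] at hB
      rcases S.eq_empty_or_nonempty with hS | ⟨t, ht⟩
      · rw [hS]; exact good_empty
      · rw [hB]
        have := IH (S.erase t).card (by rw [← hn]; exact Finset.card_erase_lt_of_mem ht)
          (S.erase t) {t} ∅ rfl (conn_singleton t) (fun a ha => (Finset.mem_erase.1 ha).1) (by simp) (by simp)
        refine good_delete ht (Finset.Subset.refl _) ?_ (by simp) this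
        intro u hu htu _
        exact ⟨mem_bd.2 ⟨by simp [hu, htu.ne.symm], t, rfl, htu⟩, by simp⟩

lemma good_univ (hG : G.IsPlanar) : Good F G Finset.univ ∅ ∅ := by
  rcases (Finset.univ : Finset V).eq_empty_or_nonempty with hS | ⟨t, ht⟩
  · rw [hS]; exact good_empty
  · have := good_main (F := F) hG _ (Finset.univ.erase t) {t} ∅ rfl (conn_singleton t) (by simp)
      (by simp) (by simp)
    refine good_delete ht (Finset.Subset.refl _) ?_ (by simp) this
    intro u hu htu _
    exact ⟨mem_bd.2 ⟨by simp [htu.ne.symm], t, rfl, htu⟩, by simp⟩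

end Induct

/-- The colouring of `G - M` by the Combinatorial Nullstellensatz. -/
lemma good_colour {V : Type*} [Fintype V] [DecidableEq V] {F : Type*} [Field F] [Infinite F]
    (h2 : ∀ x : F, x + x = 0) {G : SimpleGraph V} {M : Finset (Sym2 V)} {d : V →₀ ℕ}
    (hc : coeff d (epoly F (eset G Finset.univ ∅ M)) ≠ 0) (hd : ∀ a, d a ≤ 3)
    (L : V → Finset ℕ) (hL : ∀ v, (L v).card = 4) :
    ∃ φ : V → ℕ, (∀ v, φ v ∈ L v) ∧ ∀ u v, G.Adj u v → s(u, v) ∉ M → φ u ≠ φ v := by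
  have ι : ℕ ↪ F := Infinite.natEmbedding F
  have hhom := epoly_hom (F := F) (eset G Finset.univ ∅ M)
  have hne : epoly F (eset G Finset.univ ∅ M) ≠ 0 := fun h => hc (by rw [h, coeff_zero])
  have hdeg : (epoly F (eset G Finset.univ ∅ M)).totalDegree = d.degree := by
    rw [hhom.totalDegree hne]
    by_contra hcon
    exact hc (hhom.coeff_eq_zero (Ne.symm hcon))
  obtain ⟨s, hs, hev⟩ := MvPolynomial.combinatorial_nullstellensatz_exists_eval_nonzero
    (epoly F (eset G Finset.univ ∅ M)) d hc hdeg (fun v => (L v).map ι)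
    (fun v => by rw [Finset.card_map, hL]; have := hd v; omega)
  have hs' : ∀ v, ∃ k ∈ L v, ι k = s v := fun v => by simpa using hs v
  choose φ hφ hφs using hs'
  refine ⟨φ, hφ, fun u v huv hM heq => hev ?_⟩
  rw [epoly, map_prod]
  refine Finset.prod_eq_zero (i := s(u, v)) ?_ ?_
  · rw [mem_eset]
    exact ⟨huv, by simp, fun h => by simpa using h u (by simp), hM⟩
  · rw [efac_mk, map_add, eval_X, eval_X, ← hφs, ← hφs, heq]
    exact h2 _

/- Every planar graph contains a matching `M` such that `G - M` is 4-choosable. -/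
theorem stmt_11 {V : Type*} [Fintype V] [LinearOrder V] (G : SimpleGraph V)
    (hG : G.IsPlanar) :
    ∃ M : G.Subgraph, M.IsMatching ∧
      ∀ L : V → Finset ℕ, (∀ v, (L v).card = 4) →
        ∃ φ : V → ℕ, (∀ v, φ v ∈ L v) ∧
          ∀ u v, (G.deleteEdges M.edgeSet).Adj u v → φ u ≠ φ v := by
  let F := AlgebraicClosure (ZMod 2)
  have : CharP F 2 := inferInstance
  have : Infinite F := inferInstance
  obtain ⟨M, d, h1, h2, h3, h4, h5, h6, h7, h8⟩ := good_univ (F := F) hG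
  let N : G.Subgraph :=
    { verts := {a | ∃ e ∈ M, a ∈ e}
      Adj := fun a b => s(a, b) ∈ M
      adj_sub := fun {a b} h => h1 _ h
      edge_vert := fun {a b} h => ⟨_, h, by simp⟩
      symm := ⟨fun a b h => by rwa [Sym2.eq_swap]⟩ }
  refine ⟨N, ?_, ?_⟩
  · rintro a ⟨e, he, hae⟩
    obtain ⟨b, rfl⟩ := Sym2.mem_iff_exists.1 hae
    refine ⟨b, he, fun c hc => ?_⟩
    have := h3 _ hc _ he a (by simp) (by simp)
    exact Sym2.congr_right.1 this
  · intro L hL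
    obtain ⟨φ, hφ, hφ'⟩ := good_colour (fun x => CharTwo.add_self_eq_zero x) h4 h8 L hL
    refine ⟨φ, hφ, fun u v huv => ?_⟩
    rw [SimpleGraph.deleteEdges_adj] at huv
    exact hφ' u v huv.1 huv.2
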